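/- Let n ≥ 1, let 1 < p < ∞, let w be a weight on ℝⁿ satisfying the Berezhnoi–Muckenhoupt condition for exponent p, and let C ⊆ ℝⁿ be a nonempty open cone with vertex at the origin. Let a ∈ L^∞(ℝⁿ;ℂ) and suppose there is M ≥ 0 such that ‖F^{-1}(a·Fu)‖_{L^p(ℝⁿ,w)} ≤ M‖u‖_{L^p(ℝⁿ,w)} for all u ∈ L²(ℝⁿ) ∩ L^p(ℝⁿ,w). Then the set G := { W_C(a)u : u ∈ L²(C) ∩ L^p(C,w), ‖u‖_{L^p(C,w)} ≤ 1 } ⊆ L^p(C,w) satisfies κ(G) ≥ ‖a‖_{L^∞(ℝⁿ)}. -/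

import Mathlib

open MeasureTheory Filter Metric Complex ENNReal NNReal

noncomputable section

abbrev Eucl (n : ℕ) := EuclideanSpace ℝ (Fin n)

/-- The Fourier integral with the convention `(Fu)(ξ) = ∫ u(x) e^{-i x·ξ} dx`. -/
def fourierInt {n : ℕ} (u : Eucl n → ℂ) (ξ : Eucl n) : ℂ :=
  ∫ x : Eucl n, Complex.exp (-(Complex.I * ((inner ℝ x ξ : ℝ) : ℂ))) * u x

/-- The inverse Fourier integral `(F⁻¹u)(x) = (2π)^{-n} ∫ u(ξ) e^{i x·ξ} dξ`. -/
def fourierIntInv {n : ℕ} (u : Eucl n → ℂ) (x : Eucl n) : ℂ :=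
  (((2 * Real.pi) ^ n : ℝ)⁻¹ : ℂ) •
    ∫ ξ : Eucl n, Complex.exp (Complex.I * ((inner ℝ x ξ : ℝ) : ℂ)) * u ξ

/-- A pair consisting of the Fourier–Plancherel transform on `L²(ℝⁿ;ℂ)` and its inverse:
continuous linear maps on `L²` that are mutually inverse and agree with the Fourier
integral (resp. the inverse Fourier integral) on `L¹ ∩ L²`.  Such a pair exists and is
unique by Plancherel's theorem. -/
structure FourierPlancherelPair (n : ℕ) where
  F : Lp ℂ 2 (volume : Measure (Eucl n)) →L[ℂ] Lp ℂ 2 (volume : Measure (Eucl n))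
  Finv : Lp ℂ 2 (volume : Measure (Eucl n)) →L[ℂ] Lp ℂ 2 (volume : Measure (Eucl n))
  inv_comp : ∀ u, Finv (F u) = u
  comp_inv : ∀ u, F (Finv u) = u
  F_int : ∀ (u : Eucl n → ℂ), Integrable u → ∀ (hu2 : MemLp u 2 (volume : Measure (Eucl n))),
    (F (hu2.toLp u) : Eucl n → ℂ) =ᵐ[volume] fourierInt u
  Finv_int : ∀ (u : Eucl n → ℂ), Integrable u → ∀ (hu2 : MemLp u 2 (volume : Measure (Eucl n))),
    (Finv (hu2.toLp u) : Eucl n → ℂ) =ᵐ[volume] fourierIntInv u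

/-- Multiplication by an `L^∞` function as a map on `L²`. -/
def mulOp {n : ℕ} (a : Eucl n → ℂ) (ha : MemLp a ⊤ (volume : Measure (Eucl n)))
    (v : Lp ℂ 2 (volume : Measure (Eucl n))) : Lp ℂ 2 (volume : Measure (Eucl n)) :=
  (((Lp.memLp v).smul ha : MemLp (a • (v : Eucl n → ℂ)) 2 volume)).toLp _

/-- The Wiener–Hopf type operator `W_Ω(a) u = r_Ω F⁻¹ (a · F(e_Ω u))`, realised as a
function on `ℝⁿ` supported in `Ω` (i.e. `e_Ω W_Ω(a) u`). -/
def WOp {n : ℕ} (FP : FourierPlancherelPair n) (a : Eucl n → ℂ)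
    (ha : MemLp a ⊤ (volume : Measure (Eucl n))) (Ω : Set (Eucl n)) (u : Eucl n → ℂ)
    (hu : MemLp (Ω.indicator u) 2 (volume : Measure (Eucl n))) : Eucl n → ℂ :=
  Ω.indicator (FP.Finv (mulOp a ha (FP.F (hu.toLp _))) : Eucl n → ℂ)

/-- The norm of `f` in the weighted Lebesgue space `L^p(ℝⁿ, w)`, i.e.
`(∫ |f(x) w(x)|^p dx)^{1/p}`, computed in `[0,∞]`. -/
def wLpNorm {n : ℕ} (f : Eucl n → ℂ) (p : ℝ) (w : Eucl n → ℝ≥0∞) : ℝ≥0∞ :=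
  (∫⁻ x : Eucl n, (‖f x‖₊ : ℝ≥0∞) ^ p * w x ^ p) ^ (1 / p)

/-- The Berezhnoi–Muckenhoupt condition for a weight `w : ℝⁿ → [0,∞]` and an exponent
`p ∈ (1,∞)` with conjugate exponent `q`:
`sup_B |B|⁻¹ (∫_B w^p)^{1/p} (∫_B w^{-q})^{1/q} < ∞`, the supremum being over all balls. -/
def BMCondition {n : ℕ} (w : Eucl n → ℝ≥0∞) (p q : ℝ) : Prop :=
  ∃ K : ℝ≥0∞, K ≠ ∞ ∧ ∀ (y : Eucl n) (r : ℝ), 0 < r →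
    (volume (ball y r))⁻¹ * (∫⁻ x in ball y r, w x ^ p) ^ (1 / p) *
      (∫⁻ x in ball y r, (w x)⁻¹ ^ q) ^ (1 / q) ≤ K

/-!
Let `η` be a Lebesgue point of `a`. A wave packet of frequency `η` and large width has its Fourier
transform concentrated near `η`, so the multiplier acts on it as multiplication by `a η`, up to a
small multiple of its amplitude at every point of space. This pointwise bound is uniform in the
position of the packet. `L^p(ℝⁿ, w)` is the space `L^p` of the measure `w(x)^p dx`, which is
doubling by the Berezhnoi–Muckenhoupt condition; hence every packet can be given a width at which
its outer ball carries barely more mass than its inner ball, and it can be normalized with almost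
all of its norm on the plateau. A cone has room for arbitrarily many disjoint packets of this kind.
By the pigeonhole principle, two of their images lie in the same set of a finite cover, and on the
plateau of the packet with the larger amplitude these images differ by nearly `|a η|` times that
amplitude. So some set of the cover has diameter at least nearly `|a η|`.
-/

section NormedSpaceBalls

variable {E : Type*} [NormedAddCommGroup E] [NormedSpace ℝ E]

open scoped Pointwise in
theorem exists_ball_subset_of_isOpen_of_cone {C : Set E} (hopen : IsOpen C) (hne : C.Nonempty)
    (hcone : ∀ x ∈ C, ∀ α : ℝ, 0 < α → α • x ∈ C) (R : ℝ) : ∃ y, ball y R ⊆ C := by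
  obtain ⟨x, hx⟩ := hne
  obtain ⟨r, hr, hball⟩ := Metric.isOpen_iff.1 hopen x hx
  have ht : 0 < (|R| + 1) / r := by positivity
  refine ⟨((|R| + 1) / r) • x, ?_⟩
  calc ball (((|R| + 1) / r) • x) R
      ⊆ ball (((|R| + 1) / r) • x) (‖(|R| + 1) / r‖ * r) := ball_subset_ball <| by
        rw [Real.norm_of_nonneg ht.le, div_mul_cancel₀ _ hr.ne']
        linarith [le_abs_self R]
    _ = ((|R| + 1) / r) • ball x r := (smul_ball ht.ne' x r).symm
    _ ⊆ C := by
        rintro _ ⟨z, hz, rfl⟩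
        exact hcone z (hball hz) _ ht

theorem exists_pairwise_disjoint_ball_subset [Nontrivial E] {S : Set E}
    (hS : ∀ R, ∃ y, ball y R ⊆ S) {r : ℝ} (hr : 0 ≤ r) (m : ℕ) :
    ∃ y : Fin m → E, (∀ i, ball (y i) r ⊆ S) ∧
      Pairwise fun i j => Disjoint (ball (y i) r) (ball (y j) r) := by
  obtain ⟨x, hx⟩ := hS (r + m * (2 * r))
  obtain ⟨e, he⟩ := exists_norm_eq E (show 0 ≤ 2 * r by positivity)
  refine ⟨fun i => x + (i : ℝ) • e, fun i => (ball_subset_ball' ?_).trans hx, fun i j hij => ?_⟩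
  · have hi : (i : ℝ) ≤ m := by exact_mod_cast i.2.le
    rw [dist_self_add_left, norm_smul, he, Real.norm_natCast]
    gcongr
  · apply ball_disjoint_ball
    have hsep : (1 : ℝ) ≤ |(i : ℝ) - j| := by
      have : (1 : ℤ) ≤ |(i : ℤ) - j| := Int.one_le_abs (by omega)
      exact_mod_cast this
    rw [dist_add_left, dist_eq_norm, ← sub_smul, norm_smul, he, Real.norm_eq_abs]
    linarith [le_mul_of_one_le_left (show 0 ≤ 2 * r by positivity) hsep]

end NormedSpaceBalls

/-- A measure is (globally) doubling if the mass of a ball controls the mass of the concentric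
ball of twice the radius, uniformly over all balls. Mathlib's `IsUnifLocDoublingMeasure` only
asks for this at small radii, whereas large radii are the ones that matter here. -/
def IsDoubling {X : Type*} [PseudoMetricSpace X] [MeasurableSpace X] (μ : Measure X) : Prop :=
  ∃ K : ℝ≥0, ∀ (x : X) (r : ℝ), 0 < r → μ (ball x (2 * r)) ≤ K * μ (ball x r)

/-- Subdivide `[R₀, 2 R₀]` into `m` steps of ratio `ρ = 2 ^ (1 / m)`: if the mass grew by more than
the factor `l` at each step, it would grow by more than `l ^ m` overall. -/
theorem IsDoubling.exists_radius_measure_ball_rpow_le {X : Type*} [PseudoMetricSpace X]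
    [ProperSpace X] [MeasurableSpace X] {μ : Measure X} [μ.IsOpenPosMeasure]
    [IsFiniteMeasureOnCompacts μ] (hμ : IsDoubling μ) {s : ℝ} (hs : 0 ≤ s) {l : ℝ≥0} (hl : 1 < l) :
    ∃ ρ : ℝ, 1 < ρ ∧ ∀ (x : X) (R₀ : ℝ), 0 < R₀ → ∃ R, R₀ ≤ R ∧ ρ * R ≤ 2 * R₀ ∧
      μ (ball x (ρ * R)) ^ s ≤ l * μ (ball x R) ^ s := by
  obtain ⟨K, hK⟩ := hμ
  obtain ⟨m, hm⟩ := pow_unbounded_of_one_lt (K ^ s) hl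
  set ρ : ℝ := 2 ^ ((m + 1 : ℕ) : ℝ)⁻¹
  have hρ_one : 1 < ρ := Real.one_lt_rpow one_lt_two (by positivity)
  have hρ_pow : ρ ^ (m + 1) = 2 := Real.rpow_inv_natCast_pow zero_le_two m.succ_ne_zero
  refine ⟨ρ, hρ_one, fun x R₀ hR₀ => ?_⟩
  by_contra! hgrow
  set N : ℕ → ℝ≥0∞ := fun k => μ (ball x (ρ ^ k * R₀)) ^ s with hN
  have hN_growth : ∀ k ≤ m + 1, (l : ℝ≥0∞) ^ k * N 0 ≤ N k := by
    intro k hk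
    induction k with
    | zero => simp
    | succ k ih =>
      have hstep : l * N k < N (k + 1) := by
        have := hgrow (ρ ^ k * R₀) (le_mul_of_one_le_left hR₀.le (one_le_pow₀ hρ_one.le)) <| by
          rw [← mul_assoc, ← pow_succ', ← hρ_pow]
          gcongr
          exact hρ_one.le
        rwa [← mul_assoc, ← pow_succ'] at this
      calc (l : ℝ≥0∞) ^ (k + 1) * N 0 = l * (l ^ k * N 0) := by ring
        _ ≤ l * N k := by gcongr; exact ih (by omega)
        _ ≤ N (k + 1) := hstep.le
  have hN_doubling : N (m + 1) ≤ (K : ℝ≥0∞) ^ s * N 0 := by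
    simp only [hN, hρ_pow, pow_zero, one_mul]
    rw [← ENNReal.mul_rpow_of_nonneg _ _ hs]
    exact ENNReal.rpow_le_rpow (hK x R₀ hR₀) hs
  have hball_pos : 0 < μ (ball x (ρ ^ 0 * R₀)) := measure_ball_pos μ x (by positivity)
  have hN_ne_zero : N 0 ≠ 0 := (ENNReal.rpow_pos hball_pos measure_ball_lt_top.ne).ne'
  have hN_ne_top : N 0 ≠ ∞ := ENNReal.rpow_ne_top_of_nonneg hs measure_ball_lt_top.ne
  have hle : (l : ℝ≥0∞) ^ (m + 1) ≤ (K : ℝ≥0∞) ^ s :=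
    (ENNReal.mul_le_mul_iff_left hN_ne_zero hN_ne_top).1
      ((hN_growth (m + 1) le_rfl).trans hN_doubling)
  rw [← ENNReal.coe_rpow_of_nonneg _ hs, ← ENNReal.coe_pow, ENNReal.coe_le_coe] at hle
  exact absurd hle (hm.trans_le (pow_le_pow_right₀ hl.le m.le_succ)).not_ge

theorem IsDoubling.exists_radius_amplitude {X : Type*} [PseudoMetricSpace X] [ProperSpace X]
    [MeasurableSpace X] {μ : Measure X} [μ.IsOpenPosMeasure] [IsFiniteMeasureOnCompacts μ]
    (hμ : IsDoubling μ) {s : ℝ} (hs : 0 ≤ s) {κ : ℝ≥0} (hκ_pos : 0 < κ) (hκ : κ < 1) :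
    ∃ ρ : ℝ, 1 < ρ ∧ ∀ (x : X) (R₀ : ℝ), 0 < R₀ → ∃ (R : ℝ) (τ : ℝ≥0), R₀ ≤ R ∧ ρ * R ≤ 2 * R₀ ∧
      κ ≤ τ * μ (ball x R) ^ s ∧ τ * μ (ball x (ρ * R)) ^ s ≤ 1 := by
  obtain ⟨ρ, hρ, hscale⟩ := hμ.exists_radius_measure_ball_rpow_le hs ((one_lt_inv₀ hκ_pos).2 hκ)
  refine ⟨ρ, hρ, fun x R₀ hR₀ => ?_⟩
  obtain ⟨R, hR₀R, hρR, hmass⟩ := hscale x R₀ hR₀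
  have hball_pos : 0 < μ (ball x R) := measure_ball_pos μ x (hR₀.trans_le hR₀R)
  have hmass_pos : 0 < μ (ball x R) ^ s := ENNReal.rpow_pos hball_pos measure_ball_lt_top.ne
  have hmass_ne_top : μ (ball x R) ^ s ≠ ∞ :=
    ENNReal.rpow_ne_top_of_nonneg hs measure_ball_lt_top.ne
  refine ⟨R, ?_⟩
  lift μ (ball x R) ^ s to ℝ≥0 using hmass_ne_top with N
  have hN : N ≠ 0 := by exact_mod_cast hmass_pos.ne'
  refine ⟨κ / N, hR₀R, hρR, ?_, ?_⟩
  · exact_mod_cast (div_mul_cancel₀ κ hN).ge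
  · calc ((κ / N : ℝ≥0) : ℝ≥0∞) * μ (ball x (ρ * R)) ^ s
        ≤ ((κ / N : ℝ≥0) : ℝ≥0∞) * ((κ⁻¹ : ℝ≥0) * N) := by gcongr
      _ = ((κ / N * (κ⁻¹ * N) : ℝ≥0) : ℝ≥0∞) := by push_cast; rfl
      _ = 1 := by
        rw [ENNReal.coe_eq_one]
        field_simp

theorem addHaar_ball_two_mul {E : Type*} [NormedAddCommGroup E] [NormedSpace ℝ E]
    [FiniteDimensional ℝ E] [MeasurableSpace E] [BorelSpace E] (μ : Measure E) [μ.IsAddHaarMeasure]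
    (x : E) (r : ℝ) : μ (ball x (2 * r)) = 2 ^ Module.finrank ℝ E * μ (ball x r) := by
  rw [Measure.addHaar_ball_mul_of_pos μ x two_pos, Measure.addHaar_ball_center μ x,
    ENNReal.ofReal_pow zero_le_two, ENNReal.ofReal_ofNat]

section Weights

variable {n : ℕ} {w : Eucl n → ℝ≥0∞} {p q : ℝ}

/-- The measure `w(x)^p dx`, for which `L^p(ℝⁿ, w)` is an ordinary `L^p` space. -/
def weightMeasure (w : Eucl n → ℝ≥0∞) (p : ℝ) : Measure (Eucl n) :=
  volume.withDensity fun x => w x ^ p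

theorem weightMeasure_ball (w : Eucl n → ℝ≥0∞) (p : ℝ) (y : Eucl n) (r : ℝ) :
    weightMeasure w p (ball y r) = ∫⁻ x in ball y r, w x ^ p :=
  withDensity_apply _ measurableSet_ball

theorem weightMeasure_absolutelyContinuous (w : Eucl n → ℝ≥0∞) (p : ℝ) :
    weightMeasure w p ≪ volume :=
  withDensity_absolutelyContinuous _ _

theorem wLpNorm_eq_eLpNorm (hwmeas : Measurable w) (hw : ∀ᵐ x, w x < ∞) (hp : 0 < p)
    (f : Eucl n → ℂ) : wLpNorm f p w = eLpNorm f (ENNReal.ofReal p) (weightMeasure w p) := by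
  have hwp : ∀ᵐ x, w x ^ p < ∞ := hw.mono fun x hx => ENNReal.rpow_lt_top_of_nonneg hp.le hx.ne
  rw [eLpNorm_eq_lintegral_rpow_enorm_toReal (by simpa using hp) ENNReal.ofReal_ne_top,
    ENNReal.toReal_ofReal hp.le, wLpNorm, weightMeasure,
    lintegral_withDensity_eq_lintegral_mul_non_measurable _ (hwmeas.pow_const p) hwp]
  simp only [Pi.mul_apply, mul_comm, enorm_eq_nnnorm]

theorem isOpenPosMeasure_weightMeasure (hwmeas : Measurable w) (hw : ∀ᵐ x, 0 < w x ∧ w x < ∞)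
    (p : ℝ) : (weightMeasure w p).IsOpenPosMeasure :=
  (withDensity_absolutelyContinuous' (hwmeas.pow_const p).aemeasurable <|
    hw.mono fun _ hx => (ENNReal.rpow_pos hx.1 hx.2.ne).ne').isOpenPosMeasure

theorem weightMeasure_inv_ball_pos (hwmeas : Measurable w) (hw : ∀ᵐ x, 0 < w x ∧ w x < ∞)
    (q : ℝ) (y : Eucl n) {r : ℝ} (hr : 0 < r) : 0 < weightMeasure w⁻¹ q (ball y r) :=
  have := isOpenPosMeasure_weightMeasure hwmeas.inv
    (hw.mono fun _ hx => ⟨ENNReal.inv_pos.2 hx.2.ne, ENNReal.inv_lt_top.2 hx.1⟩) q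
  measure_ball_pos _ y hr

theorem BMCondition.exists_mul_le (hBM : BMCondition w p q) :
    ∃ K : ℝ≥0, ∀ (y : Eucl n) (r : ℝ), 0 < r →
      weightMeasure w p (ball y r) ^ (1 / p) * weightMeasure w⁻¹ q (ball y r) ^ (1 / q) ≤
        volume (ball y r) * K := by
  obtain ⟨K, hK, hbound⟩ := hBM
  lift K to ℝ≥0 using hK
  refine ⟨K, fun y r hr => ?_⟩
  rw [← ENNReal.inv_mul_le_iff (measure_ball_pos volume y hr).ne' measure_ball_lt_top.ne,
    ← mul_assoc, weightMeasure_ball, weightMeasure_ball]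
  exact hbound y r hr

theorem BMCondition.isLocallyFiniteMeasure_weightMeasure (hpq : p.HolderConjugate q)
    (hwmeas : Measurable w) (hw : ∀ᵐ x, 0 < w x ∧ w x < ∞) (hBM : BMCondition w p q) :
    IsLocallyFiniteMeasure (weightMeasure w p) := by
  obtain ⟨K, hK⟩ := hBM.exists_mul_le
  refine ⟨fun y => ⟨ball y 1, ball_mem_nhds y one_pos, lt_top_iff_ne_top.2 fun htop => ?_⟩⟩
  have hp : 0 < 1 / p := one_div_pos.2 hpq.pos
  have hq : 0 < 1 / q := one_div_pos.2 hpq.symm.pos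
  have hinv : weightMeasure w⁻¹ q (ball y 1) ^ (1 / q) ≠ 0 := fun h =>
    (weightMeasure_inv_ball_pos hwmeas hw q y one_pos).ne'
      ((ENNReal.rpow_eq_zero_iff_of_pos hq).1 h)
  have hle := hK y 1 one_pos
  rw [htop, ENNReal.top_rpow_of_pos hp, ENNReal.top_mul hinv, top_le_iff] at hle
  exact ENNReal.mul_ne_top measure_ball_lt_top.ne ENNReal.coe_ne_top hle

theorem volume_ball_le_weightMeasure_mul_weightMeasure_inv (hpq : p.HolderConjugate q)
    (hwmeas : Measurable w) (hw : ∀ᵐ x, 0 < w x ∧ w x < ∞) (y : Eucl n) (r : ℝ) :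
    volume (ball y r) ≤
      weightMeasure w p (ball y r) ^ (1 / p) * weightMeasure w⁻¹ q (ball y r) ^ (1 / q) :=
  calc volume (ball y r) = ∫⁻ x in ball y r, (w * w⁻¹) x := by
        rw [← setLIntegral_one]
        refine lintegral_congr_ae ((ae_restrict_of_ae hw).mono fun x hx => ?_)
        exact (ENNReal.mul_inv_cancel hx.1.ne' hx.2.ne).symm
    _ ≤ _ := by
        rw [weightMeasure_ball, weightMeasure_ball]
        exact ENNReal.lintegral_mul_le_Lp_mul_Lq _ hpq hwmeas.aemeasurable hwmeas.inv.aemeasurable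

theorem BMCondition.isDoubling_weightMeasure (hpq : p.HolderConjugate q) (hwmeas : Measurable w)
    (hw : ∀ᵐ x, 0 < w x ∧ w x < ∞) (hBM : BMCondition w p q) :
    IsDoubling (weightMeasure w p) := by
  obtain ⟨K, hK⟩ := hBM.exists_mul_le
  refine ⟨(2 ^ n * K) ^ p, fun y r hr => ?_⟩
  set μ := weightMeasure w p
  set ν := weightMeasure w⁻¹ q
  have hp : 0 < p := hpq.pos
  have hq : 0 ≤ 1 / q := one_div_nonneg.2 hpq.symm.nonneg
  have hholder : volume (ball y r) ≤ μ (ball y r) ^ (1 / p) * ν (ball y r) ^ (1 / q) :=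
    volume_ball_le_weightMeasure_mul_weightMeasure_inv hpq hwmeas hw y r
  have hmono : ν (ball y r) ≤ ν (ball y (2 * r)) :=
    measure_mono (ball_subset_ball (by linarith))
  have hroot : μ (ball y (2 * r)) ^ (1 / p) ≤ (2 ^ n * K) * μ (ball y r) ^ (1 / p) := by
    refine (ENNReal.mul_le_mul_iff_left (measure_ball_pos volume y hr).ne'
      measure_ball_lt_top.ne).1 ?_
    calc μ (ball y (2 * r)) ^ (1 / p) * volume (ball y r)
        ≤ μ (ball y (2 * r)) ^ (1 / p) *
            (μ (ball y r) ^ (1 / p) * ν (ball y (2 * r)) ^ (1 / q)) := by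
          grw [hholder, hmono]
      _ = μ (ball y r) ^ (1 / p) *
            (μ (ball y (2 * r)) ^ (1 / p) * ν (ball y (2 * r)) ^ (1 / q)) := by ring
      _ ≤ μ (ball y r) ^ (1 / p) * (volume (ball y (2 * r)) * K) := by
          grw [hK y (2 * r) (by positivity)]
      _ = 2 ^ n * K * μ (ball y r) ^ (1 / p) * volume (ball y r) := by
          rw [addHaar_ball_two_mul, finrank_euclideanSpace_fin]
          ring
  rw [one_div, ENNReal.rpow_inv_le_iff hp, ENNReal.mul_rpow_of_nonneg _ _ hp.le,
    ENNReal.rpow_inv_rpow hp.ne'] at hroot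
  rw [ENNReal.coe_rpow_of_nonneg _ hp.le]
  exact_mod_cast hroot

end Weights

theorem tendsto_setIntegral_compl_closedBall_zero {E : Type*} [NormedAddCommGroup E]
    [MeasurableSpace E] [OpensMeasurableSpace E] {μ : Measure E} {g : E → ℝ} (hg : Integrable g μ) :
    Tendsto (fun k : ℕ => ∫ ζ in (closedBall (0 : E) k)ᶜ, g ζ ∂μ) atTop (nhds 0) := by
  have hlim := tendsto_setIntegral_of_antitone (μ := μ) (f := g)
    (s := fun k : ℕ => (closedBall (0 : E) k)ᶜ) (fun _ => measurableSet_closedBall.compl)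
    (fun i j hij => Set.compl_subset_compl.2 (closedBall_subset_closedBall (by exact_mod_cast hij)))
    ⟨0, hg.integrableOn⟩
  rwa [← Set.compl_iUnion, iUnion_closedBall_nat, Set.compl_univ, setIntegral_empty] at hlim

theorem integral_mul_le_setIntegral_add_setIntegral_compl {X : Type*} [MeasurableSpace X]
    {μ : Measure X} {f g : X → ℝ} {B : Set X} {D Q : ℝ} (hB : MeasurableSet B) (hμB : μ B ≠ ∞)
    (hf_meas : AEStronglyMeasurable f μ) (hf : 0 ≤ f) (hfD : ∀ᵐ x ∂μ, f x ≤ D)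
    (hg_int : Integrable g μ) (hg : 0 ≤ g) (hgQ : ∀ x, g x ≤ Q) :
    ∫ x, f x * g x ∂μ ≤ Q * ∫ x in B, f x ∂μ + D * ∫ x in Bᶜ, g x ∂μ := by
  have hf_norm : ∀ᵐ x ∂μ, ‖f x‖ ≤ D := hfD.mono fun x hx => by rwa [Real.norm_of_nonneg (hf x)]
  have hfg_int : Integrable (fun x => f x * g x) μ := hg_int.bdd_mul hf_meas hf_norm
  have hf_int : IntegrableOn f B μ :=
    Measure.integrableOn_of_bounded hμB hf_meas (ae_restrict_of_ae hf_norm)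
  rw [← integral_add_compl hB hfg_int, ← integral_const_mul, ← integral_const_mul]
  gcongr ?_ + ?_
  · refine integral_mono hfg_int.integrableOn (hf_int.const_mul Q) fun x => ?_
    rw [mul_comm Q]
    exact mul_le_mul_of_nonneg_left (hgQ x) (hf x)
  · refine integral_mono_ae hfg_int.integrableOn (hg_int.integrableOn.const_mul D) ?_
    filter_upwards [ae_restrict_of_ae hfD] with x hx
    exact mul_le_mul_of_nonneg_right hx (hg x)

section LebesguePoints

variable {E : Type*} [NormedAddCommGroup E] [NormedSpace ℝ E] [FiniteDimensional ℝ E]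
  [MeasurableSpace E] [BorelSpace E] {μ : Measure E} [μ.IsAddHaarMeasure]

/-- `η` is a Lebesgue point of `a` if the mean oscillation of `a` about the value `a η` over the
ball of radius `δ` around `η` tends to zero with `δ`. -/
def IsLebesguePoint {F : Type*} [NormedAddCommGroup F] (μ : Measure E) (a : E → F) (η : E) : Prop :=
  Tendsto (fun δ : ℝ => ⨍ ξ in closedBall η δ, ‖a ξ - a η‖ ∂μ) (nhdsWithin 0 (Set.Ioi 0)) (nhds 0)

theorem exists_isLebesguePoint_lt_enorm {F : Type*} [NormedAddCommGroup F] {a : E → F}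
    (ha : LocallyIntegrable a μ) {c : ℝ≥0∞} (hc : c < eLpNorm a ⊤ μ) :
    ∃ η, c < ‖a η‖ₑ ∧ IsLebesguePoint μ a η := by
  have hlarge : ∃ᵐ ξ ∂μ, c < ‖a ξ‖ₑ := by
    refine fun hle => hc.not_ge ?_
    rw [eLpNorm_exponent_top]
    exact essSup_le_of_ae_le c (hle.mono fun ξ => le_of_not_gt)
  obtain ⟨η, hη, hlim⟩ :=
    (hlarge.and_eventually ((Besicovitch.vitaliFamily μ).ae_tendsto_average_norm_sub ha)).exists
  exact ⟨η, hη, hlim.comp (Besicovitch.tendsto_filterAt μ η)⟩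

variable {f g : E → ℝ} {D Q : ℝ}

theorem integral_comp_smul_sub {G : Type*} [NormedAddCommGroup G] [NormedSpace ℝ G] (h : E → G)
    {R : ℝ} (hR : 0 ≤ R) (η : E) :
    ∫ ξ, h (R • (ξ - η)) ∂μ = (R ^ Module.finrank ℝ E)⁻¹ • ∫ ζ, h ζ ∂μ := by
  rw [integral_sub_right_eq_self (fun ξ => h (R • ξ)) η,
    Measure.integral_comp_smul_of_nonneg μ h R (hR := hR)]

theorem setIntegral_compl_closedBall_dilation (g : E → ℝ) (η : E) {R : ℝ} (hR : 0 < R) (T : ℝ) :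
    ∫ ξ in (closedBall η (T / R))ᶜ, R ^ Module.finrank ℝ E * g (R • (ξ - η)) ∂μ =
      ∫ ζ in (closedBall (0 : E) T)ᶜ, g ζ ∂μ := by
  have hpre : (fun ξ => R • (ξ - η)) ⁻¹' (closedBall (0 : E) T)ᶜ = (closedBall η (T / R))ᶜ := by
    ext ξ
    rw [Set.mem_preimage, Set.mem_compl_iff, Set.mem_compl_iff, mem_closedBall_zero_iff, norm_smul,
      Real.norm_of_nonneg hR.le, mem_closedBall, dist_eq_norm, le_div_iff₀' hR]
  have hind : (fun ξ => (closedBall (0 : E) T)ᶜ.indicator g (R • (ξ - η))) =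
      (closedBall η (T / R))ᶜ.indicator fun ξ => g (R • (ξ - η)) := by
    rw [← hpre]
    exact funext fun ξ => (Set.indicator_comp_right _).symm
  have hscale := integral_comp_smul_sub (μ := μ) ((closedBall (0 : E) T)ᶜ.indicator g) hR.le η
  rw [hind, integral_indicator measurableSet_closedBall.compl,
    integral_indicator measurableSet_closedBall.compl, smul_eq_mul] at hscale
  rw [integral_const_mul, hscale, mul_inv_cancel_left₀ (by positivity)]

theorem integral_mul_dilation_le (hf_meas : AEStronglyMeasurable f μ) (hf : 0 ≤ f)
    (hfD : ∀ᵐ ξ ∂μ, f ξ ≤ D) (hg_int : Integrable g μ) (hg : 0 ≤ g) (hgQ : ∀ ζ, g ζ ≤ Q) (η : E)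
    {R T : ℝ} (hR : 0 < R) (hT : 0 ≤ T) :
    ∫ ξ, f ξ * (R ^ Module.finrank ℝ E * g (R • (ξ - η))) ∂μ ≤
      Q * (T ^ Module.finrank ℝ E * μ.real (closedBall 0 1)) * ⨍ ξ in closedBall η (T / R), f ξ ∂μ +
        D * ∫ ζ in (closedBall (0 : E) T)ᶜ, g ζ ∂μ := by
  have hvol : μ.real (closedBall η (T / R)) =
      (T / R) ^ Module.finrank ℝ E * μ.real (closedBall (0 : E) 1) := by
    rw [Measure.real, Measure.addHaar_closedBall' _ _ (by positivity), ENNReal.toReal_mul,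
      ENNReal.toReal_ofReal (by positivity), Measure.real]
  have hdil_int : Integrable (fun ξ => R ^ Module.finrank ℝ E * g (R • (ξ - η))) μ :=
    ((hg_int.comp_smul hR.ne').comp_sub_right η).const_mul _
  refine (integral_mul_le_setIntegral_add_setIntegral_compl (measurableSet_closedBall (x := η))
    (measure_closedBall_lt_top (r := T / R)).ne hf_meas hf hfD hdil_int
    (fun ξ => mul_nonneg (by positivity) (hg _))
    fun ξ => mul_le_mul_of_nonneg_left (hgQ _) (by positivity)).trans_eq ?_
  rw [setIntegral_compl_closedBall_dilation g η hR,
    ← measure_smul_setAverage f measure_closedBall_lt_top.ne, hvol, smul_eq_mul, div_pow]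
  field_simp

theorem tendsto_integral_mul_dilation (hf_meas : AEStronglyMeasurable f μ) (hf : 0 ≤ f)
    (hfD : ∀ᵐ ξ ∂μ, f ξ ≤ D) (hg_int : Integrable g μ) (hg : 0 ≤ g) (hgQ : ∀ ζ, g ζ ≤ Q) {η : E}
    (hη : Tendsto (fun δ : ℝ => ⨍ ξ in closedBall η δ, f ξ ∂μ) (nhdsWithin 0 (Set.Ioi 0))
      (nhds 0)) :
    Tendsto (fun R : ℝ => ∫ ξ, f ξ * (R ^ Module.finrank ℝ E * g (R • (ξ - η))) ∂μ) atTop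
      (nhds 0) := by
  refine tendsto_order.2 ⟨fun ε hε => ?_, fun ε hε => ?_⟩
  · filter_upwards [eventually_ge_atTop 0] with R hR
    exact hε.trans_le <| integral_nonneg fun ξ =>
      mul_nonneg (hf ξ) (mul_nonneg (by positivity) (hg _))
  have htail := (tendsto_setIntegral_compl_closedBall_zero hg_int).const_mul D
  rw [mul_zero] at htail
  obtain ⟨k, hk, hk_pos⟩ := ((htail.eventually_lt_const hε).and (eventually_gt_atTop 0)).exists
  have hk_pos' : (0 : ℝ) < k := by exact_mod_cast hk_pos
  have hradius : Tendsto (fun R : ℝ => k / R) atTop (nhdsWithin 0 (Set.Ioi 0)) :=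
    tendsto_nhdsWithin_iff.2 ⟨tendsto_const_nhds.div_atTop tendsto_id,
      (eventually_gt_atTop 0).mono fun R hR => div_pos hk_pos' hR⟩
  have hbound := ((hη.comp hradius).const_mul
    (Q * ((k : ℝ) ^ Module.finrank ℝ E * μ.real (closedBall 0 1)))).add_const
      (D * ∫ ζ in (closedBall (0 : E) k)ᶜ, g ζ ∂μ)
  rw [mul_zero, zero_add] at hbound
  filter_upwards [hbound.eventually_lt_const hk, eventually_gt_atTop 0] with R hlt hR
  exact (integral_mul_dilation_le hf_meas hf hfD hg_int hg hgQ η hR hk_pos'.le).trans_lt hlt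

end LebesguePoints

theorem integrable_mul_of_memLp_top {X : Type*} [MeasurableSpace X] {μ : Measure X} {f g : X → ℂ}
    (hf : MemLp f ⊤ μ) (hg : Integrable g μ) : Integrable (fun x => f x * g x) μ :=
  memLp_one_iff_integrable.1 ((memLp_one_iff_integrable.2 hg).smul hf)

section FourierMultipliers

variable {n : ℕ}

theorem norm_fourierInt_le (u : Eucl n → ℂ) (ξ : Eucl n) : ‖fourierInt u ξ‖ ≤ ∫ x, ‖u x‖ := by
  refine (norm_integral_le_integral_norm _).trans_eq (integral_congr_ae (.of_forall fun x => ?_))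
  simp [Complex.norm_exp]

theorem norm_fourierIntInv_le (v : Eucl n → ℂ) (x : Eucl n) :
    ‖fourierIntInv v x‖ ≤ ((2 * Real.pi) ^ n)⁻¹ * ∫ ξ, ‖v ξ‖ := by
  have hconst : ‖(((2 * Real.pi) ^ n : ℝ)⁻¹ : ℂ)‖ = ((2 * Real.pi) ^ n)⁻¹ := by
    rw [norm_inv, Complex.norm_real, Real.norm_of_nonneg (by positivity)]
  rw [fourierIntInv, norm_smul, hconst]
  gcongr
  refine (norm_integral_le_integral_norm _).trans_eq (integral_congr_ae (.of_forall fun ξ => ?_))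
  simp [Complex.norm_exp]

theorem fourierIntInv_sub_const_mul {u v : Eucl n → ℂ} (hu : Integrable u) (hv : Integrable v)
    (b : ℂ) (x : Eucl n) :
    fourierIntInv (fun ξ => u ξ - b * v ξ) x = fourierIntInv u x - b * fourierIntInv v x := by
  have hint : ∀ f : Eucl n → ℂ, Integrable f →
      Integrable fun ξ => exp (I * ((inner ℝ x ξ : ℝ) : ℂ)) * f ξ := fun f hf =>
    hf.bdd_mul (c := 1) (Continuous.aestronglyMeasurable (by fun_prop))
      (.of_forall fun ξ => (norm_exp_I_mul_ofReal _).le)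
  simp only [fourierIntInv, smul_eq_mul, mul_sub, mul_left_comm _ b]
  rw [integral_sub (hint u hu) ((hint v hv).const_mul b), integral_const_mul]
  ring

theorem integrable_fourierInt {φ : Eucl n → ℂ} (hsupp : HasCompactSupport φ)
    (hsmooth : ContDiff ℝ ((⊤ : ℕ∞) : WithTop ℕ∞) φ) : Integrable (fourierInt φ) := by
  have hschwartz := SchwartzMap.integrable (μ := (volume : Measure (Eucl n)))
    (FourierTransform.fourier (hsupp.toSchwartzMap hsmooth))
  rw [SchwartzMap.fourier_coe] at hschwartz
  refine (hschwartz.comp_smul (R := (2 * Real.pi)⁻¹) (by positivity)).congr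
    (.of_forall fun ξ => ?_)
  simp only [Real.fourier_eq', fourierInt, smul_eq_mul, inner_smul_right]
  refine integral_congr_ae (.of_forall fun x => ?_)
  have hphase : 2 * Real.pi * ((2 * Real.pi)⁻¹ * inner ℝ x ξ) = inner ℝ x ξ := by field_simp
  simp only [neg_mul, hphase, ofReal_neg, mul_comm I]
  rfl

variable {a u : Eucl n → ℂ}

theorem FourierPlancherelPair.memLp_fourierInt (FP : FourierPlancherelPair n) (hu : Integrable u)
    (hu2 : MemLp u 2 volume) : MemLp (fourierInt u) 2 volume :=
  (memLp_congr_ae (FP.F_int u hu hu2)).1 (Lp.memLp _)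

theorem FourierPlancherelPair.ae_eq_fourierIntInv_fourierInt (FP : FourierPlancherelPair n)
    (hu : Integrable u) (hu2 : MemLp u 2 volume) (hFu : Integrable (fourierInt u)) :
    u =ᵐ[volume] fourierIntInv (fourierInt u) := by
  have hFu2 := FP.memLp_fourierInt hu hu2
  have hF : FP.F (hu2.toLp u) = hFu2.toLp _ :=
    Lp.ext ((FP.F_int u hu hu2).trans hFu2.coeFn_toLp.symm)
  have hinv := FP.Finv_int _ hFu hFu2
  rw [← hF, FP.inv_comp] at hinv
  exact hu2.coeFn_toLp.symm.trans hinv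

theorem FourierPlancherelPair.Finv_mulOp_ae_eq (FP : FourierPlancherelPair n) (hu : Integrable u)
    (hu2 : MemLp u 2 volume) (hFu : Integrable (fourierInt u)) (ha : MemLp a ⊤ volume) :
    (FP.Finv (mulOp a ha (FP.F (hu2.toLp u))) : Eucl n → ℂ) =ᵐ[volume]
      fourierIntInv fun ξ => a ξ * fourierInt u ξ := by
  have haFu2 : MemLp (fun ξ => a ξ * fourierInt u ξ) 2 volume :=
    (FP.memLp_fourierInt hu hu2).smul ha
  have hmul : mulOp a ha (FP.F (hu2.toLp u)) = haFu2.toLp _ := by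
    refine Lp.ext ((MemLp.coeFn_toLp _).trans (EventuallyEq.trans ?_ haFu2.coeFn_toLp.symm))
    filter_upwards [FP.F_int u hu hu2] with ξ hξ
    rw [Pi.smul_apply', smul_eq_mul, hξ]
  rw [hmul]
  exact FP.Finv_int _ (integrable_mul_of_memLp_top ha hFu) haFu2

theorem FourierPlancherelPair.norm_Finv_mulOp_sub_const_mul_le (FP : FourierPlancherelPair n)
    (hu : Integrable u) (hu2 : MemLp u 2 volume) (hFu : Integrable (fourierInt u))
    (ha : MemLp a ⊤ volume) (b : ℂ) :
    ∀ᵐ x, ‖(FP.Finv (mulOp a ha (FP.F (hu2.toLp u))) : Eucl n → ℂ) x - b * u x‖ ≤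
      ((2 * Real.pi) ^ n)⁻¹ * ∫ ξ, ‖a ξ - b‖ * ‖fourierInt u ξ‖ := by
  filter_upwards [FP.Finv_mulOp_ae_eq hu hu2 hFu ha,
    FP.ae_eq_fourierIntInv_fourierInt hu hu2 hFu] with x hau hux
  rw [hau, hux, ← fourierIntInv_sub_const_mul (integrable_mul_of_memLp_top ha hFu) hFu]
  simp only [← sub_mul, ← norm_mul]
  exact norm_fourierIntInv_le _ x

end FourierMultipliers

theorem inv_smul_sub_mem_ball_zero_iff {E : Type*} [NormedAddCommGroup E] [NormedSpace ℝ E]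
    {y x : E} {R : ℝ} (hR : 0 < R) {t : ℝ} :
    R⁻¹ • (x - y) ∈ ball (0 : E) t ↔ x ∈ ball y (t * R) := by
  rw [mem_ball_zero_iff, norm_smul, norm_inv, Real.norm_of_nonneg hR.le, inv_mul_lt_iff₀' hR,
    mem_ball, dist_eq_norm]

section WavePackets

variable {n : ℕ} {φ : Eucl n → ℂ}

/-- The wave packet of amplitude `τ`, frequency `η`, centre `y` and width `R` with profile `φ`. -/
def wavePacket (φ : Eucl n → ℂ) (τ : ℂ) (η y : Eucl n) (R : ℝ) (x : Eucl n) : ℂ :=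
  τ * (exp (I * ((inner ℝ x η : ℝ) : ℂ)) * φ (R⁻¹ • (x - y)))

theorem norm_wavePacket (φ : Eucl n → ℂ) (τ : ℂ) (η y : Eucl n) (R : ℝ) (x : Eucl n) :
    ‖wavePacket φ τ η y R x‖ = ‖τ‖ * ‖φ (R⁻¹ • (x - y))‖ := by
  rw [wavePacket, norm_mul, norm_mul, norm_exp_I_mul_ofReal, one_mul]

theorem contDiff_wavePacket {k : WithTop ℕ∞} (hφ : ContDiff ℝ k φ) (τ : ℂ) (η y : Eucl n) (R : ℝ) :
    ContDiff ℝ k (wavePacket φ τ η y R) := by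
  have hinner : ContDiff ℝ k fun x : Eucl n => ((inner ℝ x η : ℝ) : ℂ) :=
    ofRealCLM.contDiff.comp (contDiff_id.inner ℝ contDiff_const)
  unfold wavePacket
  fun_prop

theorem hasCompactSupport_wavePacket (hφ : HasCompactSupport φ) (τ : ℂ) (η y : Eucl n) {R : ℝ}
    (hR : 0 < R) : HasCompactSupport (wavePacket φ τ η y R) :=
  ((hφ.comp_homeomorph ((Homeomorph.subRight y).trans
    (Homeomorph.smulOfNeZero R⁻¹ (inv_ne_zero hR.ne')))).mul_left
      (f := fun x : Eucl n => exp (I * ((inner ℝ x η : ℝ) : ℂ)))).mul_left (f := fun _ => τ)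

theorem wavePacket_eq_zero_of_notMem_ball {ρ : ℝ} (hφ : ∀ z ∉ ball 0 ρ, φ z = 0) (τ : ℂ)
    (η : Eucl n) {x y : Eucl n} {R : ℝ} (hR : 0 < R) (hx : x ∉ ball y (ρ * R)) :
    wavePacket φ τ η y R x = 0 := by
  rw [wavePacket, hφ _ ((inv_smul_sub_mem_ball_zero_iff hR).not.2 hx), mul_zero, mul_zero]

theorem norm_wavePacket_of_mem_ball (hφ : ∀ z ∈ ball 0 1, ‖φ z‖ = 1) (τ : ℂ) (η : Eucl n)
    {x y : Eucl n} {R : ℝ} (hR : 0 < R) (hx : x ∈ ball y R) : ‖wavePacket φ τ η y R x‖ = ‖τ‖ := by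
  rw [norm_wavePacket, hφ _ ((inv_smul_sub_mem_ball_zero_iff hR).2 (by rwa [one_mul])), mul_one]

theorem eLpNorm_wavePacket_le {ρ : ℝ} (hφ_le : ∀ z, ‖φ z‖ ≤ 1) (hφ : ∀ z ∉ ball 0 ρ, φ z = 0)
    (τ : ℂ) (η y : Eucl n) {R : ℝ} (hR : 0 < R) (p : ℝ≥0∞) (μ : Measure (Eucl n)) :
    eLpNorm (wavePacket φ τ η y R) p μ ≤ ‖τ‖ₑ * μ (ball y (ρ * R)) ^ (1 / p.toReal) := by
  refine (eLpNorm_mono fun x => ?_).trans (eLpNorm_indicator_const_le (s := ball y (ρ * R)) τ p)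
  by_cases hx : x ∈ ball y (ρ * R)
  · rw [Set.indicator_of_mem hx, norm_wavePacket]
    exact mul_le_of_le_one_right (norm_nonneg τ) (hφ_le _)
  · rw [wavePacket_eq_zero_of_notMem_ball hφ τ η hR hx, norm_zero]
    exact norm_nonneg _

theorem fourierInt_wavePacket (φ : Eucl n → ℂ) (τ : ℂ) (η y : Eucl n) {R : ℝ} (hR : 0 < R)
    (ξ : Eucl n) :
    fourierInt (wavePacket φ τ η y R) ξ =
      τ * exp (-(I * ((inner ℝ y (ξ - η) : ℝ) : ℂ))) * (R ^ n * fourierInt φ (R • (ξ - η))) := by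
  set h : Eucl n → ℂ := fun z => exp (-(I * ((inner ℝ z (R • (ξ - η)) : ℝ) : ℂ))) * φ z with hh
  have hphase : ∀ x : Eucl n, exp (-(I * ((inner ℝ x ξ : ℝ) : ℂ))) * wavePacket φ τ η y R x =
      τ * exp (-(I * ((inner ℝ y (ξ - η) : ℝ) : ℂ))) * h (R⁻¹ • (x - y)) := by
    intro x
    have hinner : inner ℝ (R⁻¹ • (x - y)) (R • (ξ - η)) = inner ℝ (x - y) (ξ - η) := by
      rw [inner_smul_left, inner_smul_right, conj_trivial, inv_mul_cancel_left₀ hR.ne']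
    have hexp : exp (-(I * ((inner ℝ x ξ : ℝ) : ℂ))) * exp (I * ((inner ℝ x η : ℝ) : ℂ)) =
        exp (-(I * ((inner ℝ y (ξ - η) : ℝ) : ℂ))) *
          exp (-(I * ((inner ℝ (x - y) (ξ - η) : ℝ) : ℂ))) := by
      rw [← exp_add, ← exp_add, inner_sub_left, inner_sub_right x]
      push_cast
      ring_nf
    simp only [wavePacket, hh, hinner]
    linear_combination τ * φ (R⁻¹ • (x - y)) * hexp
  have hscale : ∫ x, h (R⁻¹ • (x - y)) = R ^ n * ∫ z, h z := by
    rw [integral_comp_smul_sub h (inv_nonneg.2 hR.le), finrank_euclideanSpace_fin, inv_pow, inv_inv,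
      real_smul, Complex.ofReal_pow]
  rw [fourierInt, integral_congr_ae (.of_forall hphase), integral_const_mul, hscale, fourierInt]

theorem norm_fourierInt_wavePacket (φ : Eucl n → ℂ) (τ : ℂ) (η y : Eucl n) {R : ℝ} (hR : 0 < R)
    (ξ : Eucl n) :
    ‖fourierInt (wavePacket φ τ η y R) ξ‖ = ‖τ‖ * (R ^ n * ‖fourierInt φ (R • (ξ - η))‖) := by
  rw [fourierInt_wavePacket φ τ η y hR, norm_mul, norm_mul, norm_mul, norm_pow, norm_real,
    Real.norm_of_nonneg hR.le, ← mul_neg, ← ofReal_neg, norm_exp_I_mul_ofReal, mul_one]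

/-- The Fourier transform of a wide packet is an approximate identity around the frequency `η`. -/
theorem eventually_norm_Finv_mulOp_wavePacket_sub_le (FP : FourierPlancherelPair n)
    {a : Eucl n → ℂ} (ha : MemLp a ⊤ volume) {η : Eucl n} (hη : IsLebesguePoint volume a η)
    (hsupp : HasCompactSupport φ) (hsmooth : ContDiff ℝ ((⊤ : ℕ∞) : WithTop ℕ∞) φ) {ε : ℝ}
    (hε : 0 < ε) :
    ∀ᶠ R : ℝ in atTop, ∀ (τ : ℂ) (y : Eucl n) (hu2 : MemLp (wavePacket φ τ η y R) 2 volume),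
      ∀ᵐ x, ‖(FP.Finv (mulOp a ha (FP.F (hu2.toLp _))) : Eucl n → ℂ) x -
        a η * wavePacket φ τ η y R x‖ ≤ ε * ‖τ‖ := by
  have hosc : ∀ᵐ ξ, ‖a ξ - a η‖ ≤ (eLpNorm a ⊤ volume).toReal + ‖a η‖ := by
    rw [eLpNorm_exponent_top]
    filter_upwards [ae_le_eLpNormEssSup (f := a) (μ := volume)] with ξ hξ
    refine (norm_sub_le _ _).trans (add_le_add_left ?_ _)
    rw [← toReal_enorm]
    exact ENNReal.toReal_mono (by simpa using ha.eLpNorm_ne_top) hξ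
  have herror := (tendsto_integral_mul_dilation (ha.1.sub aestronglyMeasurable_const).norm
    (fun ξ => norm_nonneg _) hosc (integrable_fourierInt hsupp hsmooth).norm
    (fun ξ => norm_nonneg _) (norm_fourierInt_le φ) hη).const_mul ((2 * Real.pi) ^ n)⁻¹
  rw [mul_zero] at herror
  filter_upwards [herror.eventually_lt_const hε, eventually_gt_atTop 0] with R hRε hR τ y hu2
  have hsmooth' := contDiff_wavePacket hsmooth τ η y R
  have hsupp' := hasCompactSupport_wavePacket hsupp τ η y hR
  filter_upwards [FP.norm_Finv_mulOp_sub_const_mul_le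
    (hsmooth'.continuous.integrable_of_hasCompactSupport hsupp') hu2
    (integrable_fourierInt hsupp' hsmooth') ha (a η)] with x hx
  refine hx.trans ?_
  simp only [norm_fourierInt_wavePacket φ τ η y hR, mul_left_comm _ ‖τ‖, integral_const_mul]
  rw [finrank_euclideanSpace_fin] at hRε
  rw [mul_comm ε]
  gcongr
  exact hRε.le

end WavePackets

section Packets

variable {X : Type*} [MeasurableSpace X] {μ : Measure X} {p : ℝ≥0∞}

theorem mul_measure_rpow_le_eLpNorm {F : Type*} [NormedAddCommGroup F] {f : X → F} {B : Set X}
    {δ : ℝ≥0∞} (hp : p ≠ 0) (hB : MeasurableSet B) (hμB : μ B ≠ 0)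
    (hf : ∀ᵐ x ∂μ, x ∈ B → δ ≤ ‖f x‖ₑ) : δ * μ B ^ (1 / p.toReal) ≤ eLpNorm f p μ := by
  rw [← enorm_eq_self δ, ← eLpNorm_indicator_const' hB hμB hp]
  refine eLpNorm_mono_enorm_ae (hf.mono fun x hx => ?_)
  rw [enorm_indicator_eq_indicator_enorm]
  exact Set.indicator_apply_le' hx fun _ => zero_le

/-- The function `u` is supported in `U`, has constant modulus `τ` on the plateau `B ⊆ U`, whose
contribution to the `L^p(μ)` norm of `u` is at least `κ`, and `v` is within `ε * τ` of `b * u`.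
In other words, `u` is an approximate eigenfunction with eigenvalue `b` of any operator mapping
`u` to `v`. -/
structure IsApproxEigenpacket (μ : Measure X) (p : ℝ≥0∞) (b : ℂ) (ε : ℝ) (κ τ : ℝ≥0) (U B : Set X)
    (u v : X → ℂ) : Prop where
  measurableSet_plateau : MeasurableSet B
  measure_plateau_ne_zero : μ B ≠ 0
  plateau_subset : B ⊆ U
  eq_zero : ∀ x ∉ U, u x = 0
  norm_eq : ∀ x ∈ B, ‖u x‖ = τ
  norm_sub_le : ∀ᵐ x ∂μ, ‖v x - b * u x‖ ≤ ε * τ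
  le_mul_measure_plateau : (κ : ℝ≥0∞) ≤ τ * μ B ^ (1 / p.toReal)

variable {b : ℂ} {ε : ℝ} {κ τ₁ τ₂ : ℝ≥0} {U₁ U₂ B₁ B₂ : Set X} {u₁ u₂ v₁ v₂ : X → ℂ}

/-- On the plateau of the packet with the larger amplitude the other packet vanishes. -/
theorem IsApproxEigenpacket.le_eLpNorm_sub_of_le
    (h₁ : IsApproxEigenpacket μ p b ε κ τ₁ U₁ B₁ u₁ v₁)
    (h₂ : IsApproxEigenpacket μ p b ε κ τ₂ U₂ B₂ u₂ v₂) (hp : p ≠ 0) (hε : 0 ≤ ε)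
    (hU : Disjoint U₁ U₂) (hτ : τ₂ ≤ τ₁) :
    ENNReal.ofReal (‖b‖ - 2 * ε) * κ ≤ eLpNorm (v₁ - v₂) p μ := by
  have hplateau : ∀ᵐ x ∂μ, x ∈ B₁ → ENNReal.ofReal (‖b‖ - 2 * ε) * τ₁ ≤ ‖(v₁ - v₂) x‖ₑ := by
    filter_upwards [h₁.norm_sub_le, h₂.norm_sub_le] with x hx₁ hx₂ hxB
    have hu₂ : u₂ x = 0 := h₂.eq_zero x (hU.notMem_of_mem_left (h₁.plateau_subset hxB))
    have hbu₁ : ‖b * u₁ x‖ = ‖b‖ * τ₁ := by rw [norm_mul, h₁.norm_eq x hxB]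
    rw [hu₂, mul_zero, sub_zero] at hx₂
    have hv₁ : ‖b * u₁ x‖ ≤ ‖v₁ x‖ + ‖v₁ x - b * u₁ x‖ := norm_le_norm_add_norm_sub _ _
    have hv₂ : ‖v₁ x‖ - ‖v₂ x‖ ≤ ‖v₁ x - v₂ x‖ := norm_sub_norm_le _ _
    have hετ : ε * τ₂ ≤ ε * τ₁ := by gcongr
    rw [← ENNReal.ofReal_coe_nnreal, ← ENNReal.ofReal_mul' τ₁.coe_nonneg, ← ofReal_norm]
    refine ENNReal.ofReal_le_ofReal ?_
    rw [Pi.sub_apply]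
    linarith
  calc ENNReal.ofReal (‖b‖ - 2 * ε) * κ
      ≤ ENNReal.ofReal (‖b‖ - 2 * ε) * τ₁ * μ B₁ ^ (1 / p.toReal) := by
        rw [mul_assoc]
        gcongr
        exact h₁.le_mul_measure_plateau
    _ ≤ eLpNorm (v₁ - v₂) p μ :=
        mul_measure_rpow_le_eLpNorm hp h₁.measurableSet_plateau h₁.measure_plateau_ne_zero hplateau

theorem IsApproxEigenpacket.le_eLpNorm_sub (h₁ : IsApproxEigenpacket μ p b ε κ τ₁ U₁ B₁ u₁ v₁)
    (h₂ : IsApproxEigenpacket μ p b ε κ τ₂ U₂ B₂ u₂ v₂) (hp : p ≠ 0) (hε : 0 ≤ ε)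
    (hU : Disjoint U₁ U₂) : ENNReal.ofReal (‖b‖ - 2 * ε) * κ ≤ eLpNorm (v₁ - v₂) p μ := by
  rcases le_total τ₂ τ₁ with hτ | hτ
  · exact h₁.le_eLpNorm_sub_of_le h₂ hp hε hU hτ
  · rw [eLpNorm_sub_comm]
    exact h₂.le_eLpNorm_sub_of_le h₁ hp hε hU.symm hτ

end Packets

theorem exists_smooth_plateau_profile {E : Type*} [NormedAddCommGroup E] [InnerProductSpace ℝ E]
    [FiniteDimensional ℝ E] {ρ : ℝ} (hρ : 1 < ρ) :
    ∃ φ : E → ℂ, ContDiff ℝ ((⊤ : ℕ∞) : WithTop ℕ∞) φ ∧ HasCompactSupport φ ∧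
      (∀ z ∈ ball 0 1, ‖φ z‖ = 1) ∧ (∀ z ∉ ball 0 ρ, φ z = 0) ∧ ∀ z, ‖φ z‖ ≤ 1 := by
  let f : ContDiffBump (0 : E) := ⟨1, ρ, one_pos, hρ⟩
  refine ⟨fun z => (f z : ℂ), ofRealCLM.contDiff.comp f.contDiff,
    f.hasCompactSupport.comp_left Complex.ofReal_zero, fun z hz => ?_, fun z hz => ?_, fun z => ?_⟩
  · simp only [f.one_of_mem_closedBall (ball_subset_closedBall hz), Complex.ofReal_one, norm_one]
  · simp only [f.zero_of_le_dist (not_lt.1 hz), Complex.ofReal_zero]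
  · rw [norm_real, Real.norm_of_nonneg f.nonneg]
    exact f.le_one

theorem le_of_forall_ofReal_sub_two_mul_mul_le {A : ℝ} {r : ℝ≥0∞}
    (h : ∀ ε : ℝ, 0 < ε → ∀ κ : ℝ≥0, 0 < κ → κ < 1 → ENNReal.ofReal (A - 2 * ε) * κ ≤ r) :
    ENNReal.ofReal A ≤ r := by
  have hlim : Tendsto (fun ε : ℝ => ENNReal.ofReal ((A - 2 * ε) * (1 - ε)))
      (nhdsWithin 0 (Set.Ioi 0)) (nhds (ENNReal.ofReal A)) :=
    (ENNReal.continuous_ofReal.comp (by fun_prop)).tendsto' _ _ (by simp) |>.mono_left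
      nhdsWithin_le_nhds
  refine le_of_tendsto hlim ?_
  filter_upwards [Ioo_mem_nhdsGT one_pos] with ε ⟨hε_pos, hε_lt⟩
  rw [ENNReal.ofReal_mul' (by linarith)]
  exact h ε hε_pos (1 - ε).toNNReal (by simpa using hε_lt) (by simpa using hε_pos)

section WienerHopf

variable {n : ℕ} {μ : Measure (Eucl n)} {p : ℝ≥0∞} {a : Eucl n → ℂ}

theorem norm_WOp_sub_const_mul_le (FP : FourierPlancherelPair n) (ha : MemLp a ⊤ volume)
    {C : Set (Eucl n)} {u : Eucl n → ℂ} (huC : C.indicator u = u) {b : ℂ} {δ : ℝ} (hδ : 0 ≤ δ)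
    (hu2 : MemLp u 2 volume) (huC2 : MemLp (C.indicator u) 2 volume)
    (hbound : ∀ᵐ x, ‖(FP.Finv (mulOp a ha (FP.F (hu2.toLp u))) : Eucl n → ℂ) x - b * u x‖ ≤ δ) :
    ∀ᵐ x, ‖WOp FP a ha C u huC2 x - b * u x‖ ≤ δ := by
  filter_upwards [hbound] with x hx
  by_cases hxC : x ∈ C
  · simpa only [WOp, Set.indicator_of_mem hxC, huC] using hx
  · have hux : u x = 0 := by rw [← huC, Set.indicator_of_notMem hxC]
    rwa [WOp, Set.indicator_of_notMem hxC, hux, mul_zero, sub_zero, norm_zero]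

theorem exists_radius_forall_exists_isApproxEigenpacket [μ.IsOpenPosMeasure]
    [IsLocallyFiniteMeasure μ] (hμ : μ ≪ volume) (hd : IsDoubling μ) (p : ℝ≥0∞)
    (FP : FourierPlancherelPair n) (ha : MemLp a ⊤ volume) {η : Eucl n}
    (hη : IsLebesguePoint volume a η) {ε : ℝ} (hε : 0 < ε) {κ : ℝ≥0} (hκ_pos : 0 < κ)
    (hκ : κ < 1) :
    ∃ r, 0 < r ∧ ∀ (C : Set (Eucl n)) (y : Eucl n), ball y r ⊆ C →
      ∃ (τ : ℝ≥0) (B : Set (Eucl n)) (u : Eucl n → ℂ) (hu2 : MemLp (C.indicator u) 2 volume),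
        eLpNorm (C.indicator u) p μ ≤ 1 ∧
        IsApproxEigenpacket μ p (a η) ε κ τ (ball y r) B u (WOp FP a ha C u hu2) := by
  obtain ⟨ρ, hρ, hscale⟩ :=
    hd.exists_radius_amplitude (one_div_nonneg.2 p.toReal_nonneg) hκ_pos hκ
  obtain ⟨φ, hsmooth, hsupp, hplateau, hzero, hle⟩ := exists_smooth_plateau_profile (E := Eucl n) hρ
  obtain ⟨R₀, hR₀, hmul⟩ := ((eventually_gt_atTop 0).and (eventually_forall_ge_atTop.2
    (eventually_norm_Finv_mulOp_wavePacket_sub_le FP ha hη hsupp hsmooth hε))).exists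
  refine ⟨2 * R₀, by positivity, fun C y hyC => ?_⟩
  obtain ⟨R, τ, hR₀R, hρR, hκτ, hτ_le⟩ := hscale y R₀ hR₀
  have hR : 0 < R := hR₀.trans_le hR₀R
  set u := wavePacket φ (τ : ℝ) η y R
  have hτ_norm : ‖((τ : ℝ) : ℂ)‖ = τ := by rw [norm_real, NNReal.norm_eq]
  have hu_zero : ∀ x ∉ ball y (2 * R₀), u x = 0 := fun x hx =>
    wavePacket_eq_zero_of_notMem_ball hzero _ η hR fun h => hx (ball_subset_ball hρR h)
  have huC : C.indicator u = u :=
    Set.indicator_eq_self.2 fun x hx => hyC (by_contra fun h => hx (hu_zero x h))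
  have hu2 : MemLp u 2 volume := (contDiff_wavePacket hsmooth _ η y R).continuous
    |>.memLp_of_hasCompactSupport (hasCompactSupport_wavePacket hsupp _ η y hR)
  have hu_bound := hmul R hR₀R (τ : ℝ) y hu2
  rw [hτ_norm] at hu_bound
  refine ⟨τ, ball y R, u, by rwa [huC], ?_, measurableSet_ball, (measure_ball_pos μ y hR).ne',
    ball_subset_ball ((le_mul_of_one_le_left hR.le hρ.le).trans hρR), hu_zero,
    fun x hx => (norm_wavePacket_of_mem_ball hplateau _ η hR hx).trans hτ_norm,
    hμ.ae_le (norm_WOp_sub_const_mul_le FP ha huC (by positivity) hu2 _ hu_bound), hκτ⟩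
  rw [huC]
  refine (eLpNorm_wavePacket_le hle hzero _ η y hR p μ).trans ?_
  rwa [← ofReal_norm, hτ_norm, ENNReal.ofReal_coe_nnreal]

theorem ofReal_mul_le_of_isLebesguePoint_of_finite_cover (hn : 1 ≤ n) [μ.IsOpenPosMeasure]
    [IsLocallyFiniteMeasure μ] (hμ : μ ≪ volume) (hd : IsDoubling μ) (hp : p ≠ 0)
    {C : Set (Eucl n)} (hC : ∀ R, ∃ y, ball y R ⊆ C) (FP : FourierPlancherelPair n)
    (ha : MemLp a ⊤ volume) {η : Eucl n} (hη : IsLebesguePoint volume a η) {r : ℝ≥0∞}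
    (𝒞 : Finset (Set (Eucl n → ℂ)))
    (hcover : ∀ (u : Eucl n → ℂ) (hu2 : MemLp (C.indicator u) 2 volume),
      eLpNorm (C.indicator u) p μ ≤ 1 → ∃ s ∈ 𝒞, WOp FP a ha C u hu2 ∈ s)
    (hdiam : ∀ s ∈ 𝒞, ∀ f ∈ s, ∀ g ∈ s, eLpNorm (f - g) p μ ≤ r)
    {ε : ℝ} (hε : 0 < ε) {κ : ℝ≥0} (hκ_pos : 0 < κ) (hκ : κ < 1) :
    ENNReal.ofReal (‖a η‖ - 2 * ε) * κ ≤ r := by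
  have : Nonempty (Fin n) := ⟨⟨0, hn⟩⟩
  obtain ⟨R, hR, hpacket⟩ :=
    exists_radius_forall_exists_isApproxEigenpacket hμ hd p FP ha hη hε hκ_pos hκ
  obtain ⟨y, hyC, hdisj⟩ := exists_pairwise_disjoint_ball_subset hC hR.le (𝒞.card + 1)
  choose τ B u hu2 hu_norm hu using fun i => hpacket C (y i) (hyC i)
  choose s hs hsu using fun i => hcover (u i) (hu2 i) (hu_norm i)
  obtain ⟨i, -, j, -, hij, hsij⟩ := Finset.exists_ne_map_eq_of_card_lt_of_maps_to
    (s := Finset.univ) (t := 𝒞) (f := s) (by simp) fun i _ => hs i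
  exact ((hu i).le_eLpNorm_sub (hu j) hp hε.le (hdisj hij)).trans
    (hdiam (s i) (hs i) _ (hsu i) _ (hsij ▸ hsu j))

end WienerHopf

theorem weighted_kuratowski_lower_bound_general {n : ℕ} (hn : 1 ≤ n) {μ : Measure (Eucl n)}
    [μ.IsOpenPosMeasure] [IsLocallyFiniteMeasure μ] (hμ : μ ≪ volume) (hd : IsDoubling μ)
    {p : ℝ≥0∞} (hp : p ≠ 0) {C : Set (Eucl n)} (hC : ∀ R, ∃ y, ball y R ⊆ C)
    (a : Eucl n → ℂ) (ha : MemLp a ⊤ (volume : Measure (Eucl n))) (FP : FourierPlancherelPair n) :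
    eLpNorm a ⊤ volume ≤
      sInf { r : ℝ≥0∞ |
        ∃ 𝒞 : Finset (Set (Eucl n → ℂ)),
          (∀ (u : Eucl n → ℂ) (hu2 : MemLp (C.indicator u) 2 (volume : Measure (Eucl n))),
            eLpNorm (C.indicator u) p μ ≤ 1 → ∃ s ∈ 𝒞, WOp FP a ha C u hu2 ∈ s) ∧
          ∀ s ∈ 𝒞, ∀ f ∈ s, ∀ g ∈ s, eLpNorm (f - g) p μ ≤ r } := by
  refine le_sInf fun r ⟨𝒞, hcover, hdiam⟩ => ?_
  by_contra! hr
  obtain ⟨η, hrη, hη⟩ := exists_isLebesguePoint_lt_enorm (ha.locallyIntegrable le_top) hr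
  refine hrη.not_ge ?_
  rw [← ofReal_norm]
  exact le_of_forall_ofReal_sub_two_mul_mul_le fun ε hε κ hκ_pos hκ =>
    ofReal_mul_le_of_isLebesguePoint_of_finite_cover hn hμ hd hp hC FP ha hη 𝒞 hcover hdiam hε
      hκ_pos hκ

/-- lower bound for the Kuratowski measure of noncompactness of the image of
the unit ball of `L²(C) ∩ L^p(C,w)` under a Wiener–Hopf type operator on the weighted
Lebesgue space `L^p(C, w)` over an open cone `C`.  The Kuratowski measure is spelled out
via covers by finitely many sets of diameter (in the `L^p(C,w)` pseudometric) at most `r`. -/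
theorem weighted_kuratowski_lower_bound (n : ℕ) (hn : 1 ≤ n) (p q : ℝ) (hp : 1 < p)
    (hpq : 1 / p + 1 / q = 1) (w : Eucl n → ℝ≥0∞) (hwmeas : Measurable w)
    (hw : ∀ᵐ x : Eucl n, 0 < w x ∧ w x < ∞) (hBM : BMCondition w p q)
    (C : Set (Eucl n)) (hCopen : IsOpen C) (hCne : C.Nonempty)
    (hcone : ∀ x ∈ C, ∀ α : ℝ, 0 < α → α • x ∈ C)
    (a : Eucl n → ℂ) (ha : MemLp a ⊤ (volume : Measure (Eucl n)))
    (FP : FourierPlancherelPair n) (M : ℝ) (hM0 : 0 ≤ M)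
    (hM : ∀ (u : Eucl n → ℂ) (hu2 : MemLp u 2 (volume : Measure (Eucl n))),
      wLpNorm u p w < ∞ →
      wLpNorm (FP.Finv (mulOp a ha (FP.F (hu2.toLp u))) : Eucl n → ℂ) p w
        ≤ ENNReal.ofReal M * wLpNorm u p w) :
    eLpNorm a ⊤ volume ≤
      sInf { r : ℝ≥0∞ |
        ∃ 𝒞 : Finset (Set (Eucl n → ℂ)),
          (∀ (u : Eucl n → ℂ) (hu2 : MemLp (C.indicator u) 2 (volume : Measure (Eucl n))),
            wLpNorm (C.indicator u) p w < ∞ → wLpNorm (C.indicator u) p w ≤ 1 →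
              ∃ s ∈ 𝒞, WOp FP a ha C u hu2 ∈ s) ∧
          ∀ s ∈ 𝒞, ∀ f ∈ s, ∀ g ∈ s, wLpNorm (f - g) p w ≤ r } := by
  have hpq' : p.HolderConjugate q := Real.holderConjugate_iff.2 ⟨hp, by simpa using hpq⟩
  have := isOpenPosMeasure_weightMeasure hwmeas hw p
  have := hBM.isLocallyFiniteMeasure_weightMeasure hpq' hwmeas hw
  simp only [wLpNorm_eq_eLpNorm hwmeas (hw.mono fun _ hx => hx.2) hpq'.pos]
  refine (weighted_kuratowski_lower_bound_general hn (weightMeasure_absolutelyContinuous w p)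
    (hBM.isDoubling_weightMeasure hpq' hwmeas hw) (p := ENNReal.ofReal p) (by simpa using hpq'.pos)
    (exists_ball_subset_of_isOpen_of_cone hCopen hCne hcone) a ha FP).trans (sInf_le_sInf ?_)
  rintro r ⟨𝒞, hcover, hdiam⟩
  exact ⟨𝒞, fun u hu2 hu => hcover u hu2 (hu.trans_lt one_lt_top) hu, hdiam⟩

end
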